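/- arXiv:2502.20221 — 2 statements merged into one kernel-verified Lean document; each statement's English description precedes it below -/
import Mathlib

section
/- There exists a constant C, independent of a, b, N, h and f, such that for all real a < b, every positive integer N, every h > 0, and every f ∈ C([a,b]), max_{t∈[a,b]} |(P_N^SE f)(t) − (P_N^RZ f)(t)| ≤ C · log(N+1) / (e^{Nh} − 1) · max_{t∈[a,b]}|f(t)|. -/
/-! Put `q = exp (N h)`, `f₋ = f(t_{-N})`, `f₊ = f(t_N)` and `d = (f₋ - f₊) / (q - 1)`. The tanh map gives
`ω_a(t_j) = 1 / (1 + exp (j h))` and `ω_b(t_j) = exp (j h) / (1 + exp (j h))`, so that `Δ_N = (q - 1) / (q + 1)`,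
`β_N(f) = f₋ + d` and `γ_N(f) = f₊ - d` (`betaN_eq`, `gammaN_eq`). Since `β_N ω_a + γ_N ω_b` interpolates `f` at
`t_{±N}`, the sum in `P_N^RZ` may be extended to `-N ≤ j ≤ N`, and for `a < t < b`
`P_N^SE f - P_N^RZ f = d (ω_b(t) - ω_a(t) + ∑_{|j| ≤ N} (ω_a(t_j) - ω_b(t_j)) S(j,h)(φ(t)))` (`PNSE_sub_PNRZ_eq`).
All weights are at most `1` in modulus, `‖d‖ ≤ 2 M / (q - 1)`, and the Lebesgue function `∑_{|j| ≤ N} |S(j,h)(x)|`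
is bounded by a multiple of `log (N + 1)` through comparison with a harmonic sum (`sum_sincF_le`). -/


namespace SincVolterra

noncomputable section

/-- The sine integral `Si(x) = ∫₀ˣ (sin τ)/τ dτ`. -/
def Si (x : ℝ) : ℝ := ∫ τ in (0:ℝ)..x, Real.sin τ / τ

/-- The Sinc function `S(j,h)(x)`. -/
def sincF (j : ℤ) (h x : ℝ) : ℝ :=
  if x = (j : ℝ) * h then 1
  else Real.sin (Real.pi * (x - (j : ℝ) * h) / h) / (Real.pi * (x - (j : ℝ) * h) / h)

/-- `J(j,h)(x) = h (1/2 + (1/π) Si(π(x - jh)/h))`. -/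
def Jfun (j : ℤ) (h x : ℝ) : ℝ :=
  h * (1/2 + (1/Real.pi) * Si (Real.pi * (x - (j : ℝ) * h) / h))

/-- The tanh (SE) transformation. -/
def psiSE (a b x : ℝ) : ℝ := (b - a)/2 * Real.tanh (x/2) + (b + a)/2

/-- The inverse of the SE transformation. -/
def phiSE (a b t : ℝ) : ℝ := Real.log ((t - a)/(b - t))

/-- The double-exponential (DE) transformation. -/
def psiDE (a b x : ℝ) : ℝ := (b - a)/2 * Real.tanh (Real.pi/2 * Real.sinh x) + (b + a)/2

/-- The inverse of the DE transformation. -/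
def phiDE (a b t : ℝ) : ℝ := Real.arsinh (1/Real.pi * Real.log ((t - a)/(b - t)))

/-- The SE transformation as a complex map. -/
def psiSEC (a b : ℝ) (z : ℂ) : ℂ :=
  (((b : ℂ) - (a : ℂ))/2) * Complex.tanh (z/2) + ((b : ℂ) + (a : ℂ))/2

/-- The DE transformation as a complex map. -/
def psiDEC (a b : ℝ) (z : ℂ) : ℂ :=
  (((b : ℂ) - (a : ℂ))/2) * Complex.tanh (((Real.pi : ℂ))/2 * Complex.sinh z) + ((b : ℂ) + (a : ℂ))/2

/-- The strip `D_d = {ζ : |Im ζ| < d}`. -/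
def Dstrip (d : ℝ) : Set ℂ := {z : ℂ | |z.im| < d}

/-- `D = ψ^SE(D_d)`. -/
def DSE (a b d : ℝ) : Set ℂ := psiSEC a b '' Dstrip d

def omA (a b t : ℝ) : ℝ := (b - t)/(b - a)

def omB (a b t : ℝ) : ℝ := (t - a)/(b - a)

/-- The SE collocation points `t_j^SE = ψ^SE(jh)`. -/
def tSE (a b h : ℝ) (j : ℤ) : ℝ := psiSE a b ((j : ℝ) * h)

/-- The DE collocation points `t_j^DE = ψ^DE(jh)`. -/
def tDE (a b h : ℝ) (j : ℤ) : ℝ := psiDE a b ((j : ℝ) * h)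

/-- `δ_m^{(-1)} = 1/2 + (1/π) Si(π m)`. -/
def deltaM (m : ℤ) : ℝ := 1/2 + (1/Real.pi) * Si (Real.pi * (m : ℝ))

/-- `J(j,h)(φ^SE(t))`, extended continuously to `t = a` (value 0) and `t = b` (value h). -/
def JSEext (a b h : ℝ) (j : ℤ) (t : ℝ) : ℝ :=
  if t ≤ a then 0 else if b ≤ t then h else Jfun j h (phiSE a b t)

/-- `J(j,h)(φ^DE(t))`, extended continuously to `t = a` (value 0) and `t = b` (value h). -/
def JDEext (a b h : ℝ) (j : ℤ) (t : ℝ) : ℝ :=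
  if t ≤ a then 0 else if b ≤ t then h else Jfun j h (phiDE a b t)

/-- The operator `V_N^SE`, with the continuous extension to `t = a, b` built in. -/
def VNSE (a b h : ℝ) (N : ℕ) (k : ℝ → ℝ → ℂ) (f : ℝ → ℂ) (t : ℝ) : ℂ :=
  ∑ j ∈ Finset.Icc (-(N:ℤ)) (N:ℤ),
    k t (tSE a b h j) * f (tSE a b h j) * ((deriv (psiSE a b) ((j : ℝ) * h) : ℝ) : ℂ)
      * ((JSEext a b h j t : ℝ) : ℂ)

/-- The operator `V_N^DE`, with the continuous extension to `t = a, b` built in. -/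
def VNDE (a b h : ℝ) (N : ℕ) (k : ℝ → ℝ → ℂ) (f : ℝ → ℂ) (t : ℝ) : ℂ :=
  ∑ j ∈ Finset.Icc (-(N:ℤ)) (N:ℤ),
    k t (tDE a b h j) * f (tDE a b h j) * ((deriv (psiDE a b) ((j : ℝ) * h) : ℝ) : ℂ)
      * ((JDEext a b h j t : ℝ) : ℂ)

/-- The generalized SE-Sinc approximation operator `P_N^SE`. -/
def PNSE (a b h : ℝ) (N : ℕ) (f : ℝ → ℂ) (t : ℝ) : ℂ :=
  if t ≤ a then f (tSE a b h (-(N:ℤ)))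
  else if b ≤ t then f (tSE a b h (N:ℤ))
  else f (tSE a b h (-(N:ℤ))) * ((omA a b t : ℝ) : ℂ) + f (tSE a b h (N:ℤ)) * ((omB a b t : ℝ) : ℂ)
    + ∑ j ∈ Finset.Icc (-(N:ℤ)) (N:ℤ),
        (f (tSE a b h j) - f (tSE a b h (-(N:ℤ))) * ((omA a b (tSE a b h j) : ℝ) : ℂ)
          - f (tSE a b h (N:ℤ)) * ((omB a b (tSE a b h j) : ℝ) : ℂ))
          * ((sincF j h (phiSE a b t) : ℝ) : ℂ)

/-- The generalized DE-Sinc approximation operator `P_N^DE`. -/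
def PNDE (a b h : ℝ) (N : ℕ) (f : ℝ → ℂ) (t : ℝ) : ℂ :=
  if t ≤ a then f (tDE a b h (-(N:ℤ)))
  else if b ≤ t then f (tDE a b h (N:ℤ))
  else f (tDE a b h (-(N:ℤ))) * ((omA a b t : ℝ) : ℂ) + f (tDE a b h (N:ℤ)) * ((omB a b t : ℝ) : ℂ)
    + ∑ j ∈ Finset.Icc (-(N:ℤ)) (N:ℤ),
        (f (tDE a b h j) - f (tDE a b h (-(N:ℤ))) * ((omA a b (tDE a b h j) : ℝ) : ℂ)
          - f (tDE a b h (N:ℤ)) * ((omB a b (tDE a b h j) : ℝ) : ℂ))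
          * ((sincF j h (phiDE a b t) : ℝ) : ℂ)

/-- `Δ_N = ω_a(t_{-N})ω_b(t_N) - ω_b(t_{-N})ω_a(t_N)`. -/
def DeltaN (a b h : ℝ) (N : ℕ) : ℝ :=
  omA a b (tSE a b h (-(N:ℤ))) * omB a b (tSE a b h (N:ℤ))
    - omB a b (tSE a b h (-(N:ℤ))) * omA a b (tSE a b h (N:ℤ))

def betaN (a b h : ℝ) (N : ℕ) (f : ℝ → ℂ) : ℂ :=
  (f (tSE a b h (-(N:ℤ))) * ((omB a b (tSE a b h (N:ℤ)) : ℝ) : ℂ)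
    - f (tSE a b h (N:ℤ)) * ((omB a b (tSE a b h (-(N:ℤ))) : ℝ) : ℂ)) / ((DeltaN a b h N : ℝ) : ℂ)

def gammaN (a b h : ℝ) (N : ℕ) (f : ℝ → ℂ) : ℂ :=
  (f (tSE a b h (N:ℤ)) * ((omA a b (tSE a b h (-(N:ℤ))) : ℝ) : ℂ)
    - f (tSE a b h (-(N:ℤ))) * ((omA a b (tSE a b h (N:ℤ)) : ℝ) : ℂ)) / ((DeltaN a b h N : ℝ) : ℂ)

/-- The Rashidinia–Zarebnia interpolation operator `P_N^RZ`. -/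
def PNRZ (a b h : ℝ) (N : ℕ) (f : ℝ → ℂ) (t : ℝ) : ℂ :=
  if t ≤ a then betaN a b h N f
  else if b ≤ t then gammaN a b h N f
  else betaN a b h N f * ((omA a b t : ℝ) : ℂ) + gammaN a b h N f * ((omB a b t : ℝ) : ℂ)
    + ∑ j ∈ Finset.Icc (-(N:ℤ)+1) ((N:ℤ)-1),
        (f (tSE a b h j) - betaN a b h N f * ((omA a b (tSE a b h j) : ℝ) : ℂ)
          - gammaN a b h N f * ((omB a b (tSE a b h j) : ℝ) : ℂ))
          * ((sincF j h (phiSE a b t) : ℝ) : ℂ)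

/-- Reindexing `Fin (2N+1)` as `{-N, …, N}`. -/
def zidx (N : ℕ) (i : Fin (2*N+1)) : ℤ := ((i : ℕ) : ℤ) - (N : ℤ)

/-- The matrix `V_n^SE`. -/
def VnSE (a b h : ℝ) (N : ℕ) (k : ℝ → ℝ → ℂ) : Matrix (Fin (2*N+1)) (Fin (2*N+1)) ℂ :=
  Matrix.of fun i j =>
    k (tSE a b h (zidx N i)) (tSE a b h (zidx N j))
      * ((deriv (psiSE a b) ((zidx N j : ℝ) * h) : ℝ) : ℂ) * ((h : ℝ) : ℂ)
      * ((deltaM (zidx N i - zidx N j) : ℝ) : ℂ)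

/-- The matrix `V_n^DE`. -/
def VnDE (a b h : ℝ) (N : ℕ) (k : ℝ → ℝ → ℂ) : Matrix (Fin (2*N+1)) (Fin (2*N+1)) ℂ :=
  Matrix.of fun i j =>
    k (tDE a b h (zidx N i)) (tDE a b h (zidx N j))
      * ((deriv (psiDE a b) ((zidx N j : ℝ) * h) : ℝ) : ℂ) * ((h : ℝ) : ℂ)
      * ((deltaM (zidx N i - zidx N j) : ℝ) : ℂ)

/-- The right-hand-side vector `g_n^SE`. -/
def gnSE (a b h : ℝ) (N : ℕ) (g : ℝ → ℂ) : Fin (2*N+1) → ℂ := fun i => g (tSE a b h (zidx N i))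

/-- The right-hand-side vector `g_n^DE`. -/
def gnDE (a b h : ℝ) (N : ℕ) (g : ℝ → ℂ) : Fin (2*N+1) → ℂ := fun i => g (tDE a b h (zidx N i))

/-- The matrix `E_n^RZ`. -/
def EnRZ (a b h : ℝ) (N : ℕ) : Matrix (Fin (2*N+1)) (Fin (2*N+1)) ℂ :=
  Matrix.of fun i j =>
    if (j : ℕ) = 0 then ((omA a b (tSE a b h (zidx N i)) : ℝ) : ℂ)
    else if (j : ℕ) = 2*N then ((omB a b (tSE a b h (zidx N i)) : ℝ) : ℂ)
    else if i = j then 1 else 0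

/-- The matrix `V_n^RZ`. -/
def VnRZ (a b h : ℝ) (N : ℕ) (k : ℝ → ℝ → ℂ) : Matrix (Fin (2*N+1)) (Fin (2*N+1)) ℂ :=
  Matrix.of fun i j =>
    if (j : ℕ) = 0 then VNSE a b h N k (fun t => ((omA a b t : ℝ) : ℂ)) (tSE a b h (zidx N i))
    else if (j : ℕ) = 2*N then VNSE a b h N k (fun t => ((omB a b t : ℝ) : ℂ)) (tSE a b h (zidx N i))
    else k (tSE a b h (zidx N i)) (tSE a b h (zidx N j))
      * ((deriv (psiSE a b) ((zidx N j : ℝ) * h) : ℝ) : ℂ) * ((h : ℝ) : ℂ)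
      * ((deltaM (zidx N i - zidx N j) : ℝ) : ℂ)

/-- The SE-Sinc-Nyström solution `u_N^SE` built from a solution vector `u` of the
linear system, with the continuous extension to the endpoints built in. -/
def uNSEf (a b h : ℝ) (N : ℕ) (k : ℝ → ℝ → ℂ) (g : ℝ → ℂ) (u : Fin (2*N+1) → ℂ) (t : ℝ) : ℂ :=
  g t + ∑ i : Fin (2*N+1),
    k t (tSE a b h (zidx N i)) * u i * ((deriv (psiSE a b) ((zidx N i : ℝ) * h) : ℝ) : ℂ)
      * ((JSEext a b h (zidx N i) t : ℝ) : ℂ)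

/-- The DE-Sinc-Nyström solution `u_N^DE` built from a solution vector `u` of the
linear system, with the continuous extension to the endpoints built in. -/
def uNDEf (a b h : ℝ) (N : ℕ) (k : ℝ → ℝ → ℂ) (g : ℝ → ℂ) (u : Fin (2*N+1) → ℂ) (t : ℝ) : ℂ :=
  g t + ∑ i : Fin (2*N+1),
    k t (tDE a b h (zidx N i)) * u i * ((deriv (psiDE a b) ((zidx N i : ℝ) * h) : ℝ) : ℂ)
      * ((JDEext a b h (zidx N i) t : ℝ) : ℂ)

/-- The Rashidinia–Zarebnia SE-Sinc-collocation solution `w_N^RZ` built from a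
coefficient vector `c`, with the continuous extension to the endpoints built in. -/
def wRZf (a b h : ℝ) (N : ℕ) (c : Fin (2*N+1) → ℂ) (t : ℝ) : ℂ :=
  if t ≤ a then c ⟨0, by omega⟩
  else if b ≤ t then c ⟨2*N, by omega⟩
  else c ⟨0, by omega⟩ * ((omA a b t : ℝ) : ℂ) + c ⟨2*N, by omega⟩ * ((omB a b t : ℝ) : ℂ)
    + ∑ j ∈ Finset.univ.filter (fun j : Fin (2*N+1) => (j : ℕ) ≠ 0 ∧ (j : ℕ) ≠ 2*N),
        c j * ((sincF (zidx N j) h (phiSE a b t) : ℝ) : ℂ)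

/-- The SE mesh size `h = √(πd/(αN))`. -/
def hstepSE (α d : ℝ) (N : ℕ) : ℝ := Real.sqrt (Real.pi * d / (α * N))

/-- The DE mesh size `h = log(2dN/α)/N`. -/
def hstepDE (α d : ℝ) (N : ℕ) : ℝ := Real.log (2*d*N/α) / N

lemma tSE_eq (a b h : ℝ) (j : ℤ) :
    tSE a b h j = (a + b * Real.exp (j * h)) / (1 + Real.exp (j * h)) := by
  have h1 := Real.exp_pos ((j : ℝ) * h / 2)
  have h2 : Real.exp ((j : ℝ) * h) = Real.exp ((j : ℝ) * h / 2) ^ 2 := by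
    rw [← Real.exp_nat_mul]; congr 1; push_cast; ring
  unfold tSE psiSE
  rw [Real.tanh_eq_sinh_div_cosh, Real.sinh_eq, Real.cosh_eq, Real.exp_neg, h2]
  field_simp
  ring

lemma omA_tSE {a b : ℝ} (hab : a < b) (h : ℝ) (j : ℤ) :
    omA a b (tSE a b h j) = 1 / (1 + Real.exp (j * h)) := by
  have h1 := Real.exp_pos ((j : ℝ) * h)
  have h2 : b - a ≠ 0 := by linarith
  rw [tSE_eq]; unfold omA
  field_simp
  ring

lemma omB_tSE {a b : ℝ} (hab : a < b) (h : ℝ) (j : ℤ) :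
    omB a b (tSE a b h j) = Real.exp (j * h) / (1 + Real.exp (j * h)) := by
  have h1 := Real.exp_pos ((j : ℝ) * h)
  have h2 : b - a ≠ 0 := by linarith
  rw [tSE_eq]; unfold omB
  field_simp
  ring

lemma tSE_mem {a b : ℝ} (hab : a < b) (h : ℝ) (j : ℤ) : tSE a b h j ∈ Set.Icc a b := by
  have h1 := Real.exp_pos ((j : ℝ) * h)
  rw [tSE_eq]
  constructor
  · rw [le_div_iff₀ (by positivity)]; nlinarith
  · rw [div_le_iff₀ (by positivity)]; nlinarith

/-- The common defect `d = (f(t_{-N}) - f(t_N)) / (exp (N h) - 1)`, equal to `β_N(f) - f(t_{-N})` and to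
`f(t_N) - γ_N(f)`. -/
def defect (a b h : ℝ) (N : ℕ) (f : ℝ → ℂ) : ℂ :=
  (f (tSE a b h (-(N:ℤ))) - f (tSE a b h (N:ℤ))) / ((Real.exp ((N : ℝ) * h) - 1 : ℝ) : ℂ)

lemma DeltaN_eq {a b : ℝ} (hab : a < b) (h : ℝ) (N : ℕ) :
    DeltaN a b h N = (Real.exp (N * h) - 1) / (Real.exp (N * h) + 1) := by
  have h1 := Real.exp_pos ((N : ℝ) * h)
  unfold DeltaN
  rw [omA_tSE hab, omA_tSE hab, omB_tSE hab, omB_tSE hab]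
  push_cast
  rw [neg_mul, Real.exp_neg]
  field_simp
  ring

lemma one_lt_exp_mul {N : ℕ} (hN : 0 < N) {h : ℝ} (hh : 0 < h) : 1 < Real.exp ((N : ℝ) * h) := by
  have : (0 : ℝ) < N := by exact_mod_cast hN
  exact Real.one_lt_exp_iff.2 (by positivity)

lemma betaN_eq {a b : ℝ} (hab : a < b) {h : ℝ} (hh : 0 < h) {N : ℕ} (hN : 0 < N) (f : ℝ → ℂ) :
    betaN a b h N f = f (tSE a b h (-(N:ℤ))) + defect a b h N f := by
  have h1 := one_lt_exp_mul hN hh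
  unfold betaN defect
  rw [DeltaN_eq hab, omB_tSE hab, omB_tSE hab]
  generalize f (tSE a b h (-(N:ℤ))) = x
  generalize f (tSE a b h (N:ℤ)) = y
  simp only [Int.cast_neg, Int.cast_natCast]
  rw [neg_mul, Real.exp_neg]
  generalize Real.exp ((N : ℝ) * h) = q at h1
  have e0 : (q : ℂ) ≠ 0 := by exact_mod_cast (by linarith : q ≠ 0)
  have e1 : (q : ℂ) - 1 ≠ 0 := by exact_mod_cast (by linarith : q - 1 ≠ 0)
  have e2 : (q : ℂ) + 1 ≠ 0 := by exact_mod_cast (by linarith : q + 1 ≠ 0)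
  have e3 : 1 + (q : ℂ) ≠ 0 := by rwa [add_comm]
  have e4 : 1 + (q : ℂ)⁻¹ ≠ 0 := by
    intro h; apply e2; field_simp at h; simpa using h
  push_cast
  field_simp
  ring

lemma gammaN_eq {a b : ℝ} (hab : a < b) {h : ℝ} (hh : 0 < h) {N : ℕ} (hN : 0 < N) (f : ℝ → ℂ) :
    gammaN a b h N f = f (tSE a b h (N:ℤ)) - defect a b h N f := by
  have h1 := one_lt_exp_mul hN hh
  unfold gammaN defect
  rw [DeltaN_eq hab, omA_tSE hab, omA_tSE hab]
  generalize f (tSE a b h (-(N:ℤ))) = x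
  generalize f (tSE a b h (N:ℤ)) = y
  simp only [Int.cast_neg, Int.cast_natCast]
  rw [neg_mul, Real.exp_neg]
  generalize Real.exp ((N : ℝ) * h) = q at h1
  have e0 : (q : ℂ) ≠ 0 := by exact_mod_cast (by linarith : q ≠ 0)
  have e1 : (q : ℂ) - 1 ≠ 0 := by exact_mod_cast (by linarith : q - 1 ≠ 0)
  have e2 : (q : ℂ) + 1 ≠ 0 := by exact_mod_cast (by linarith : q + 1 ≠ 0)
  have e3 : 1 + (q : ℂ) ≠ 0 := by rwa [add_comm]
  have e4 : 1 + (q : ℂ)⁻¹ ≠ 0 := by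
    intro h; apply e2; field_simp at h; simpa using h
  push_cast
  field_simp
  ring

/-- The function `β_N(f) ω_a + γ_N(f) ω_b` takes the value `f(t_{-N})` at `t_{-N}`. -/
lemma interp_left {a b : ℝ} (hab : a < b) {h : ℝ} (hh : 0 < h) {N : ℕ} (hN : 0 < N) (f : ℝ → ℂ) :
    f (tSE a b h (-(N:ℤ))) - betaN a b h N f * ((omA a b (tSE a b h (-(N:ℤ))) : ℝ) : ℂ)
      - gammaN a b h N f * ((omB a b (tSE a b h (-(N:ℤ))) : ℝ) : ℂ) = 0 := by
  have h1 := one_lt_exp_mul hN hh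
  have hD : ((DeltaN a b h N : ℝ) : ℂ) ≠ 0 := by
    rw [DeltaN_eq hab]
    exact_mod_cast (div_pos (by linarith) (by linarith) : (0 : ℝ) < _).ne'
  unfold betaN gammaN
  field_simp
  unfold DeltaN
  push_cast
  ring

/-- The function `β_N(f) ω_a + γ_N(f) ω_b` takes the value `f(t_N)` at `t_N`. -/
lemma interp_right {a b : ℝ} (hab : a < b) {h : ℝ} (hh : 0 < h) {N : ℕ} (hN : 0 < N) (f : ℝ → ℂ) :
    f (tSE a b h (N:ℤ)) - betaN a b h N f * ((omA a b (tSE a b h (N:ℤ)) : ℝ) : ℂ)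
      - gammaN a b h N f * ((omB a b (tSE a b h (N:ℤ)) : ℝ) : ℂ) = 0 := by
  have h1 := one_lt_exp_mul hN hh
  have hD : ((DeltaN a b h N : ℝ) : ℂ) ≠ 0 := by
    rw [DeltaN_eq hab]
    exact_mod_cast (div_pos (by linarith) (by linarith) : (0 : ℝ) < _).ne'
  unfold betaN gammaN
  field_simp
  unfold DeltaN
  push_cast
  ring

lemma PNSE_sub_PNRZ_eq {a b : ℝ} (hab : a < b) {h : ℝ} (hh : 0 < h) {N : ℕ} (hN : 0 < N) (f : ℝ → ℂ)
    {t : ℝ} (ha : a < t) (hb : t < b) :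
    PNSE a b h N f t - PNRZ a b h N f t = defect a b h N f *
      (((omB a b t - omA a b t + ∑ j ∈ Finset.Icc (-(N:ℤ)) (N:ℤ),
        (omA a b (tSE a b h j) - omB a b (tSE a b h j)) * sincF j h (phiSE a b t) : ℝ)) : ℂ) := by
  -- The terms `j = ±N` that `P_N^RZ` omits vanish by interpolation.
  have hext : ∑ j ∈ Finset.Icc (-(N:ℤ)+1) ((N:ℤ)-1),
        (f (tSE a b h j) - betaN a b h N f * ((omA a b (tSE a b h j) : ℝ) : ℂ)
          - gammaN a b h N f * ((omB a b (tSE a b h j) : ℝ) : ℂ))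
          * ((sincF j h (phiSE a b t) : ℝ) : ℂ)
      = ∑ j ∈ Finset.Icc (-(N:ℤ)) (N:ℤ),
        (f (tSE a b h j) - betaN a b h N f * ((omA a b (tSE a b h j) : ℝ) : ℂ)
          - gammaN a b h N f * ((omB a b (tSE a b h j) : ℝ) : ℂ))
          * ((sincF j h (phiSE a b t) : ℝ) : ℂ) := by
    apply Finset.sum_subset
    · exact Finset.Icc_subset_Icc (by omega) (by omega)
    · intro j hj hj'
      rw [Finset.mem_Icc] at hj hj'
      have : j = -(N:ℤ) ∨ j = (N:ℤ) := by omega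
      rcases this with rfl | rfl
      · rw [interp_left hab hh hN, zero_mul]
      · rw [interp_right hab hh hN, zero_mul]
  unfold PNSE PNRZ
  rw [if_neg (not_le.2 ha), if_neg (not_le.2 hb), if_neg (not_le.2 ha), if_neg (not_le.2 hb), hext,
    betaN_eq hab hh hN, gammaN_eq hab hh hN, add_sub_add_comm, ← Finset.sum_sub_distrib]
  push_cast
  rw [mul_add, Finset.mul_sum]
  congr 1
  · ring
  · apply Finset.sum_congr rfl
    intro j _
    ring

/-- Decay of the Sinc function in terms of any lower bound `k` for the distance of `x / h` from `j`. -/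
lemma abs_sincF_le {h : ℝ} (hh : 0 < h) (x : ℝ) (j : ℤ) (k : ℕ) (hk : (k : ℝ) ≤ |x / h - j|) :
    |sincF j h x| ≤ 2 / ((k : ℝ) + 1) := by
  unfold sincF
  split_ifs with hx
  · have : x / h - j = 0 := by rw [hx]; field_simp; ring
    rw [this, abs_zero] at hk
    have hk0 : (0 : ℝ) ≤ k := k.cast_nonneg
    have : (k : ℝ) = 0 := le_antisymm hk hk0
    rw [this]; norm_num
  · have harg : Real.pi * (x - j * h) / h = Real.pi * (x / h - j) := by field_simp
    have hne : x / h - j ≠ 0 := by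
      intro h0; apply hx; field_simp at h0; linarith
    rw [harg, abs_div, abs_mul, abs_of_pos Real.pi_pos]
    set u := x / h - j
    have hu : 0 < |u| := abs_pos.2 hne
    have hpi := Real.pi_gt_three
    have hs1 := Real.abs_sin_le_one (Real.pi * u)
    have hs2 : |Real.sin (Real.pi * u)| ≤ Real.pi * |u| := by
      rw [← abs_of_pos Real.pi_pos, ← abs_mul, abs_of_pos Real.pi_pos]
      exact Real.abs_sin_le_abs
    rw [div_le_div_iff₀ (by positivity) (by positivity)]
    nlinarith [mul_le_mul_of_nonneg_right hs1 (k.cast_nonneg : (0 : ℝ) ≤ k),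
      mul_le_mul_of_nonneg_right hpi.le hu.le]

lemma sum_sincF_le_of_injOn {h : ℝ} (hh : 0 < h) (x : ℝ) (N : ℕ) (F : Finset ℤ) (e : ℤ → ℕ)
    (hinj : Set.InjOn e F) (hlt : ∀ j ∈ F, e j < 2 * N + 1)
    (he : ∀ j ∈ F, (e j : ℝ) ≤ |x / h - j|) :
    ∑ j ∈ F, |sincF j h x| ≤ 2 * (harmonic (2 * N + 1) : ℝ) := by
  calc ∑ j ∈ F, |sincF j h x| ≤ ∑ j ∈ F, 2 / ((e j : ℝ) + 1) :=
        Finset.sum_le_sum fun j hj => abs_sincF_le hh x j _ (he j hj)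
    _ = ∑ k ∈ F.image e, 2 / ((k : ℝ) + 1) := by
        rw [Finset.sum_image hinj]
    _ ≤ ∑ k ∈ Finset.range (2 * N + 1), 2 / ((k : ℝ) + 1) := by
        apply Finset.sum_le_sum_of_subset_of_nonneg
        · intro k hk
          obtain ⟨j, hj, rfl⟩ := Finset.mem_image.1 hk
          exact Finset.mem_range.2 (hlt j hj)
        · intros; positivity
    _ = 2 * (harmonic (2 * N + 1) : ℝ) := by
        unfold harmonic
        push_cast
        rw [Finset.mul_sum]
        apply Finset.sum_congr rfl
        intros; rw [div_eq_mul_inv]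

lemma half_le_log {N : ℕ} (hN : 0 < N) : 1 / 2 ≤ Real.log ((N : ℝ) + 1) := by
  have h1 : (1 : ℝ) ≤ N := by exact_mod_cast hN
  have h2 : Real.log 2 ≤ Real.log ((N : ℝ) + 1) := Real.log_le_log (by norm_num) (by linarith)
  linarith [Real.log_two_gt_d9]

lemma harmonic_le_log {N : ℕ} (hN : 0 < N) :
    (harmonic (2 * N + 1) : ℝ) ≤ 4 * Real.log ((N : ℝ) + 1) := by
  have h1 := harmonic_le_one_add_log (2 * N + 1)
  -- `2 N + 1 ≤ (N + 1) ^ 2`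
  have h2 : Real.log ((2 * N + 1 : ℕ) : ℝ) ≤ 2 * Real.log ((N : ℝ) + 1) := by
    have : 2 * Real.log ((N : ℝ) + 1) = Real.log (((N : ℝ) + 1) ^ 2) := by
      rw [Real.log_pow]; norm_num
    rw [this]
    apply Real.log_le_log (by positivity)
    push_cast
    nlinarith [sq_nonneg (N : ℝ)]
  linarith [half_le_log hN]

/-- Logarithmic bound for the Lebesgue function of Sinc interpolation. The nodes on each side of `x / h` are
numbered starting from the nearest one in `[-N, N]`, so the number of a node is at most its distance from `x / h`. -/
lemma sum_sincF_le {h : ℝ} (hh : 0 < h) (x : ℝ) {N : ℕ} (hN : 0 < N) :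
    ∑ j ∈ Finset.Icc (-(N:ℤ)) (N:ℤ), |sincF j h x| ≤ 16 * Real.log ((N : ℝ) + 1) := by
  have hH := harmonic_le_log hN
  set y := x / h with hy
  rw [← Finset.sum_filter_add_sum_filter_not _ (fun j : ℤ => j ≤ ⌊y⌋)]
  have hfl := Int.floor_le y
  have hfl' := Int.lt_floor_add_one y
  have hL : ∑ j ∈ (Finset.Icc (-(N:ℤ)) (N:ℤ)).filter (fun j : ℤ => j ≤ ⌊y⌋), |sincF j h x|
      ≤ 2 * (harmonic (2 * N + 1) : ℝ) := by
    apply sum_sincF_le_of_injOn hh x N _ (fun j => (min (N:ℤ) ⌊y⌋ - j).toNat)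
    · intro i hi j hj hij
      simp only [Finset.coe_filter, Finset.mem_Icc, Set.mem_ofPred_eq] at hi hj hij
      omega
    · intro j hj
      simp only [Finset.mem_filter, Finset.mem_Icc] at hj
      omega
    · intro j hj
      simp only [Finset.mem_filter, Finset.mem_Icc] at hj
      have h1 : ((min (N:ℤ) ⌊y⌋ - j).toNat : ℤ) ≤ ⌊y⌋ - j := by omega
      have h2 : (((min (N:ℤ) ⌊y⌋ - j).toNat : ℕ) : ℝ) ≤ (⌊y⌋ : ℝ) - j := by exact_mod_cast h1
      exact h2.trans ((by linarith : (⌊y⌋ : ℝ) - j ≤ y - j).trans (le_abs_self _))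
  have hR : ∑ j ∈ (Finset.Icc (-(N:ℤ)) (N:ℤ)).filter (fun j : ℤ => ¬ j ≤ ⌊y⌋), |sincF j h x|
      ≤ 2 * (harmonic (2 * N + 1) : ℝ) := by
    apply sum_sincF_le_of_injOn hh x N _ (fun j => (j - max (-(N:ℤ)) (⌊y⌋ + 1)).toNat)
    · intro i hi j hj hij
      simp only [Finset.coe_filter, Finset.mem_Icc, Set.mem_ofPred_eq] at hi hj hij
      omega
    · intro j hj
      simp only [Finset.mem_filter, Finset.mem_Icc] at hj
      omega
    · intro j hj
      simp only [Finset.mem_filter, Finset.mem_Icc] at hj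
      have h1 : ((j - max (-(N:ℤ)) (⌊y⌋ + 1)).toNat : ℤ) ≤ j - (⌊y⌋ + 1) := by omega
      have h2 : (((j - max (-(N:ℤ)) (⌊y⌋ + 1)).toNat : ℕ) : ℝ) ≤ (j : ℝ) - (⌊y⌋ + 1) := by
        exact_mod_cast h1
      exact h2.trans ((by linarith : (j : ℝ) - (⌊y⌋ + 1) ≤ -(y - j)).trans (neg_le_abs _))
  linarith

lemma abs_omA_sub_omB_le {a b : ℝ} (hab : a < b) {t : ℝ} (ht : t ∈ Set.Icc a b) :
    |omA a b t - omB a b t| ≤ 1 := by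
  have h2 : 0 < b - a := by linarith
  unfold omA omB
  rw [← sub_div, abs_div, abs_of_pos h2, div_le_one h2, abs_le]
  constructor <;> linarith [ht.1, ht.2]

lemma norm_defect_le {a b : ℝ} (hab : a < b) {h : ℝ} (hh : 0 < h) {N : ℕ} (hN : 0 < N) {f : ℝ → ℂ} {M : ℝ}
    (hM : ∀ t ∈ Set.Icc a b, ‖f t‖ ≤ M) :
    ‖defect a b h N f‖ ≤ 2 * M / (Real.exp ((N : ℝ) * h) - 1) := by
  have h1 : 0 < Real.exp ((N : ℝ) * h) - 1 := sub_pos.2 (one_lt_exp_mul hN hh)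
  unfold defect
  rw [norm_div, Complex.norm_real, Real.norm_of_nonneg h1.le]
  gcongr
  have := norm_sub_le (f (tSE a b h (-(N:ℤ)))) (f (tSE a b h (N:ℤ)))
  linarith [hM _ (tSE_mem hab h (-(N:ℤ))), hM _ (tSE_mem hab h (N:ℤ))]

/-- a uniform bound for `P_N^SE f - P_N^RZ f`. -/
theorem PNSE_sub_PNRZ_bound :
    ∃ C : ℝ, 0 < C ∧ ∀ (a b : ℝ), a < b → ∀ (N : ℕ), 0 < N → ∀ (h : ℝ), 0 < h →
      ∀ f : ℝ → ℂ, ContinuousOn f (Set.Icc a b) →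
      ∀ M : ℝ, (∀ t ∈ Set.Icc a b, ‖f t‖ ≤ M) →
      ∀ t ∈ Set.Icc a b,
        ‖PNSE a b h N f t - PNRZ a b h N f t‖
          ≤ C * Real.log ((N : ℝ) + 1) / (Real.exp ((N : ℝ) * h) - 1) * M := by
  refine ⟨36, by norm_num, ?_⟩
  intro a b hab N hN h hh f _ M hM t ht
  have hq : 0 < Real.exp ((N : ℝ) * h) - 1 := sub_pos.2 (one_lt_exp_mul hN hh)
  have hM0 : 0 ≤ M := (norm_nonneg _).trans (hM t ht)
  have hd := norm_defect_le hab hh hN hM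
  have hlog := half_le_log hN
  have hfactor : ∀ K : ℝ, 0 ≤ K → K ≤ 18 * Real.log ((N : ℝ) + 1) → ‖defect a b h N f‖ * K
      ≤ 36 * Real.log ((N : ℝ) + 1) / (Real.exp ((N : ℝ) * h) - 1) * M := by
    intro K hK0 hK
    calc ‖defect a b h N f‖ * K
        ≤ 2 * M / (Real.exp ((N : ℝ) * h) - 1) * (18 * Real.log ((N : ℝ) + 1)) := by gcongr
      _ = _ := by ring
  by_cases hta : t ≤ a
  · have : PNSE a b h N f t - PNRZ a b h N f t = -defect a b h N f := by
      unfold PNSE PNRZ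
      rw [if_pos hta, if_pos hta, betaN_eq hab hh hN]; ring
    rw [this, norm_neg]
    simpa using hfactor 1 (by norm_num) (by linarith)
  by_cases htb : b ≤ t
  · have : PNSE a b h N f t - PNRZ a b h N f t = defect a b h N f := by
      unfold PNSE PNRZ
      rw [if_neg hta, if_neg hta, if_pos htb, if_pos htb, gammaN_eq hab hh hN]; ring
    rw [this]
    simpa using hfactor 1 (by norm_num) (by linarith)
  rw [PNSE_sub_PNRZ_eq hab hh hN f (not_le.1 hta) (not_le.1 htb), norm_mul, Complex.norm_real,
    Real.norm_eq_abs]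
  apply hfactor _ (abs_nonneg _)
  have h1 := abs_omA_sub_omB_le hab ht
  rw [abs_sub_comm] at h1
  have h2 : |∑ j ∈ Finset.Icc (-(N:ℤ)) (N:ℤ),
      (omA a b (tSE a b h j) - omB a b (tSE a b h j)) * sincF j h (phiSE a b t)|
      ≤ 16 * Real.log ((N : ℝ) + 1) := by
    refine (Finset.abs_sum_le_sum_abs _ _).trans (le_trans ?_ (sum_sincF_le hh (phiSE a b t) hN))
    apply Finset.sum_le_sum
    intro j _
    rw [abs_mul]
    exact mul_le_of_le_one_left (abs_nonneg _) (abs_omA_sub_omB_le hab (tSE_mem hab h j))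
  refine (abs_add_le _ _).trans ?_
  linarith

end

end SincVolterra
end

section
/- Let k be continuous on [a,b]×[a,b] and g ∈ C([a,b]). The following two statements are equivalent: (A) there exists a unique u_N^DE ∈ C([a,b]) satisfying u_N^DE = g + V_N^DE[u_N^DE]; (B) there exists a unique v ∈ C([a,b]) satisfying v = P_N^DE(g + V_N^DE[v]). Moreover, when these hold, v = P_N^DE u_N^DE. -/
/-!
Both operators see a function only through its values at the nodes `t_j = ψ(jh)`, `|j| ≤ N`, and
`P_N f` interpolates `f` at these nodes (`PNDE_node`), since `φ(ψ(jh)) = jh` and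
`S(j,h)(ih) = δ_ij`. Hence `V_N (P_N f) = V_N f`, and the maps `u ↦ P_N u` and `v ↦ g + V_N v` carry
solutions of `u = g + V_N u` to solutions of `v = P_N (g + V_N v)` and back
(`BpredDE_of_ApredDE`, `ApredDE_of_BpredDE`). They are mutually inverse on solutions, so unique
solvability transfers in both directions and `v = P_N u`.

Solutions are required to be continuous on `[a,b]`, so `P_N f` and `V_N f` must be shown to be
continuous up to the endpoints. For `P_N` this is the decay of the Sinc function; for `V_N` it is the
Dirichlet integral `Si(x) → ±π/2` as `x → ±∞`. The latter is obtained from the bound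
`|Si x - π/2| ≤ 2/x` (`abs_Si_sub_le`): by Fubini,
`Si x = ∫₀^∞ ∫₀ˣ sin τ e^{-τs} dτ ds = ∫₀^∞ (1 - e^{-xs}(cos x + s sin x)) / (1 + s²) ds`.
-/

namespace SincVolterra

noncomputable section

/-- The Nyström-type fixed point equation `u = g + V_N^DE u` on `[a,b]`. -/
def ApredDE (a b h : ℝ) (N : ℕ) (k : ℝ → ℝ → ℂ) (g : ℝ → ℂ) (f : ℝ → ℂ) : Prop :=
  ContinuousOn f (Set.Icc a b) ∧ ∀ t ∈ Set.Icc a b, f t = g t + VNDE a b h N k f t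

/-- The collocation fixed point equation `v = P_N^DE (g + V_N^DE v)` on `[a,b]`. -/
def BpredDE (a b h : ℝ) (N : ℕ) (k : ℝ → ℝ → ℂ) (g : ℝ → ℂ) (v : ℝ → ℂ) : Prop :=
  ContinuousOn v (Set.Icc a b) ∧
    ∀ t ∈ Set.Icc a b, v t = PNDE a b h N (fun s => g s + VNDE a b h N k v s) t

open Filter Topology MeasureTheory

/-! ### The sine integral -/

lemma integral_sin_mul_exp (x s : ℝ) :
    ∫ τ in (0:ℝ)..x, Real.sin τ * Real.exp (-τ * s) =
      (1 + s ^ 2)⁻¹ - Real.exp (-x * s) * (Real.cos x + s * Real.sin x) * (1 + s ^ 2)⁻¹ := by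
  have h0 : (1 + s ^ 2) ≠ 0 := by positivity
  have hd : ∀ τ ∈ Set.uIcc 0 x, HasDerivAt
      (fun τ => -(Real.exp (-τ * s) * (Real.cos τ + s * Real.sin τ) * (1 + s ^ 2)⁻¹))
      (Real.sin τ * Real.exp (-τ * s)) τ := by
    intro τ _
    have h1 : HasDerivAt (fun τ => Real.exp (-τ * s)) (Real.exp (-τ * s) * (-1 * s)) τ :=
      (((hasDerivAt_id τ).neg).mul_const s).exp
    have h2 : HasDerivAt (fun τ => Real.cos τ + s * Real.sin τ)
        (-Real.sin τ + s * Real.cos τ) τ :=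
      (Real.hasDerivAt_cos τ).add ((Real.hasDerivAt_sin τ).const_mul s)
    refine (((h1.mul h2).mul_const ((1 + s ^ 2)⁻¹)).neg).congr_deriv ?_
    apply mul_right_cancel₀ h0
    rw [neg_mul, mul_assoc _ _ (1 + s ^ 2), inv_mul_cancel₀ h0]
    ring
  rw [intervalIntegral.integral_eq_sub_of_hasDerivAt hd
    (Continuous.intervalIntegrable (by fun_prop) _ _)]
  simp
  ring

lemma Si_eq_integral_sinc (x : ℝ) : Si x = ∫ τ in (0:ℝ)..x, Real.sinc τ := by
  unfold Si
  refine intervalIntegral.integral_congr_ae ?_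
  have : ∀ᵐ τ : ℝ, τ ≠ 0 := by simp [ae_iff]
  filter_upwards [this] with τ hτ _
  rw [Real.sinc_of_ne_zero hτ]

lemma continuous_Si : Continuous Si := by
  have : Si = fun x => ∫ τ in (0:ℝ)..x, Real.sinc τ := funext Si_eq_integral_sinc
  rw [this]
  exact intervalIntegral.continuous_primitive
    (fun _ _ => Real.continuous_sinc.intervalIntegrable _ _) 0

lemma Si_neg (x : ℝ) : Si (-x) = -Si x := by
  rw [Si_eq_integral_sinc, Si_eq_integral_sinc]
  have := intervalIntegral.integral_comp_neg (a := 0) (b := x) Real.sinc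
  simp only [Real.sinc_neg, neg_zero] at this
  rw [this, intervalIntegral.integral_symm]

/-- The bound comes from writing `1/τ = ∫₀^∞ e^{-τs} ds` and exchanging the two integrals. -/
lemma abs_Si_sub_le {x : ℝ} (hx : 0 < x) : |Si x - Real.pi / 2| ≤ 2 / x := by
  set F : ℝ → ℝ → ℝ := fun τ s => Real.sin τ * Real.exp (-τ * s) with hF
  have hexp : ∀ {c : ℝ}, 0 < c → IntegrableOn (fun s : ℝ => Real.exp (-c * s)) (Set.Ioi 0) :=
    fun hc => integrableOn_exp_mul_Ioi (by linarith) 0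
  have hexpI : ∀ {c : ℝ}, 0 < c → ∫ s in Set.Ioi (0:ℝ), Real.exp (-c * s) = 1 / c := by
    intro c hc
    rw [integral_exp_mul_Ioi (by linarith : -c < 0) 0]
    simp
  have hint : Integrable (Function.uncurry F)
      ((volume.restrict (Set.Ioc 0 x)).prod (volume.restrict (Set.Ioi 0))) := by
    rw [integrable_prod_iff]
    · constructor
      · refine (ae_restrict_iff' measurableSet_Ioc).2 (Eventually.of_forall fun τ hτ => ?_)
        exact (hexp hτ.1).const_mul (Real.sin τ)
      · have h1 : IntegrableOn (fun τ => |Real.sinc τ|) (Set.Ioc 0 x) :=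
          (Real.continuous_sinc.abs.integrableOn_Icc).mono_set Set.Ioc_subset_Icc_self
        refine h1.congr ((ae_restrict_iff' measurableSet_Ioc).2
          (Eventually.of_forall fun τ hτ => ?_))
        simp only [Function.uncurry, hF, norm_mul, Real.norm_eq_abs, Real.abs_exp]
        rw [integral_const_mul, hexpI hτ.1, Real.sinc_of_ne_zero hτ.1.ne', abs_div,
          abs_of_pos hτ.1]
        ring
    · exact Continuous.aestronglyMeasurable (by simp only [hF, Function.uncurry_def]; fun_prop)
  have hSi : Si x = ∫ s in Set.Ioi (0:ℝ), ∫ τ in Set.Ioc 0 x, F τ s := by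
    rw [← integral_integral_swap hint, Si, intervalIntegral.integral_of_le hx.le]
    refine setIntegral_congr_fun measurableSet_Ioc fun τ hτ => ?_
    simp only [hF]
    rw [integral_const_mul, hexpI hτ.1]
    ring
  have hpi : Real.pi / 2 = ∫ s in Set.Ioi (0:ℝ), (1 + s ^ 2)⁻¹ := by
    rw [integral_Ioi_inv_one_add_sq]; simp
  have hint' : IntegrableOn (fun s => ∫ τ in Set.Ioc 0 x, F τ s) (Set.Ioi 0) :=
    hint.integral_prod_right
  rw [hSi, hpi, ← integral_sub hint' integrable_inv_one_add_sq.integrableOn]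
  have h2 : 2 / x = ∫ s in Set.Ioi (0:ℝ), 2 * Real.exp (-x * s) := by
    rw [integral_const_mul, hexpI hx]; ring
  rw [h2, ← Real.norm_eq_abs]
  refine norm_integral_le_of_norm_le ((hexp hx).const_mul 2) ?_
  refine (ae_restrict_iff' measurableSet_Ioi).2 (Eventually.of_forall fun s hs => ?_)
  have hs : 0 < s := hs
  simp only [hF]
  rw [← intervalIntegral.integral_of_le hx.le, integral_sin_mul_exp]
  have h3 : |Real.cos x + s * Real.sin x| ≤ 1 + s :=
    (abs_add_le _ _).trans (add_le_add (Real.abs_cos_le_one x) (by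
      rw [abs_mul, abs_of_pos hs]
      exact mul_le_of_le_one_right hs.le (Real.abs_sin_le_one x)))
  have h4 : |Real.cos x + s * Real.sin x| * (1 + s ^ 2)⁻¹ ≤ 2 := by
    rw [← div_eq_mul_inv, div_le_iff₀ (by positivity)]
    nlinarith [sq_nonneg (s - 1)]
  rw [sub_sub_cancel_left, norm_neg, norm_mul, norm_mul, Real.norm_eq_abs, Real.norm_eq_abs,
    Real.norm_eq_abs, Real.abs_exp, abs_of_pos (by positivity : 0 < (1 + s ^ 2)⁻¹), mul_assoc,
    mul_comm]
  exact mul_le_mul_of_nonneg_right h4 (Real.exp_nonneg _)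

/-- The Dirichlet integral. -/
lemma tendsto_Si_atTop : Tendsto Si atTop (𝓝 (Real.pi / 2)) := by
  rw [tendsto_iff_dist_tendsto_zero]
  refine squeeze_zero' (Eventually.of_forall fun _ => dist_nonneg) ?_
    (tendsto_const_nhds.div_atTop tendsto_id : Tendsto (fun x : ℝ => 2 / x) atTop (𝓝 0))
  filter_upwards [eventually_gt_atTop 0] with x hx
  exact abs_Si_sub_le hx

lemma tendsto_Si_atBot : Tendsto Si atBot (𝓝 (-(Real.pi / 2))) := by
  refine ((tendsto_Si_atTop.comp tendsto_neg_atBot_atTop).neg).congr fun x => ?_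
  simp [Si_neg]

/-! ### The basis functions on the real line -/

lemma sincF_eq {h : ℝ} (hh : 0 < h) (j : ℤ) (x : ℝ) :
    sincF j h x = Real.sinc (Real.pi / h * (x - j * h)) := by
  have e : Real.pi * (x - j * h) / h = Real.pi / h * (x - j * h) := by ring
  unfold sincF
  split_ifs with hx
  · simp [hx]
  · rw [Real.sinc_of_ne_zero, e]
    have : x - j * h ≠ 0 := sub_ne_zero.2 hx
    have := Real.pi_pos
    positivity

lemma sincF_node {h : ℝ} (hh : 0 < h) (j i : ℤ) :
    sincF j h (i * h) = if i = j then 1 else 0 := by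
  unfold sincF
  have hi : ((i : ℝ) * h = j * h) ↔ i = j := by
    rw [mul_left_inj' hh.ne', Int.cast_inj]
  simp only [hi]
  split_ifs with hij
  · rfl
  · have e : Real.pi * ((i : ℝ) * h - j * h) / h = ((i - j : ℤ) : ℝ) * Real.pi := by
      push_cast; field_simp
    rw [e, Real.sin_int_mul_pi, zero_div]

lemma tendsto_sinc_zero {l : Filter ℝ} (hl : Tendsto (fun x : ℝ => |x|) l atTop) :
    Tendsto Real.sinc l (𝓝 0) := by
  refine squeeze_zero_norm' ?_ (tendsto_inv_atTop_zero.comp hl)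
  filter_upwards [hl.eventually_gt_atTop 0] with x hx
  have h0 : x ≠ 0 := abs_pos.1 hx
  rw [Real.sinc_of_ne_zero h0, norm_div, Real.norm_eq_abs, Real.norm_eq_abs, Function.comp,
    div_eq_mul_inv]
  exact mul_le_of_le_one_left (by positivity) (Real.abs_sin_le_one x)

lemma tendsto_affine_atTop {h : ℝ} (hh : 0 < h) (c : ℝ) :
    Tendsto (fun x : ℝ => Real.pi / h * (x - c)) atTop atTop :=
  (tendsto_atTop_add_const_right _ (-c) tendsto_id).const_mul_atTop
    (div_pos Real.pi_pos hh)

lemma tendsto_affine_atBot {h : ℝ} (hh : 0 < h) (c : ℝ) :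
    Tendsto (fun x : ℝ => Real.pi / h * (x - c)) atBot atBot :=
  (tendsto_atBot_add_const_right _ (-c) tendsto_id).const_mul_atBot
    (div_pos Real.pi_pos hh)

lemma continuous_sincF {h : ℝ} (hh : 0 < h) (j : ℤ) : Continuous (sincF j h) := by
  rw [funext (sincF_eq hh j)]
  exact Real.continuous_sinc.comp (by fun_prop)

lemma tendsto_sincF_atTop {h : ℝ} (hh : 0 < h) (j : ℤ) : Tendsto (sincF j h) atTop (𝓝 0) := by
  rw [funext (sincF_eq hh j)]
  exact (tendsto_sinc_zero tendsto_abs_atTop_atTop).comp (tendsto_affine_atTop hh _)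

lemma tendsto_sincF_atBot {h : ℝ} (hh : 0 < h) (j : ℤ) : Tendsto (sincF j h) atBot (𝓝 0) := by
  rw [funext (sincF_eq hh j)]
  exact (tendsto_sinc_zero tendsto_abs_atBot_atTop).comp (tendsto_affine_atBot hh _)

lemma Jfun_eq (j : ℤ) (h : ℝ) :
    Jfun j h = fun x => h * (1/2 + (1/Real.pi) * Si (Real.pi / h * (x - j * h))) := by
  funext x
  rw [Jfun, div_mul_eq_mul_div Real.pi h]

lemma continuous_Jfun (j : ℤ) (h : ℝ) : Continuous (Jfun j h) := by
  rw [Jfun_eq]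
  have := continuous_Si
  fun_prop

lemma tendsto_Jfun_atTop {h : ℝ} (hh : 0 < h) (j : ℤ) : Tendsto (Jfun j h) atTop (𝓝 h) := by
  rw [Jfun_eq]
  have := ((((tendsto_Si_atTop.comp (tendsto_affine_atTop hh (j * h))).const_mul
    (1/Real.pi)).const_add (1/2)).const_mul h)
  have hπ := Real.pi_ne_zero
  refine this.trans (le_of_eq (congrArg 𝓝 ?_))
  field_simp
  ring

lemma tendsto_Jfun_atBot {h : ℝ} (hh : 0 < h) (j : ℤ) : Tendsto (Jfun j h) atBot (𝓝 0) := by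
  rw [Jfun_eq]
  have := ((((tendsto_Si_atBot.comp (tendsto_affine_atBot hh (j * h))).const_mul
    (1/Real.pi)).const_add (1/2)).const_mul h)
  have hπ := Real.pi_ne_zero
  refine this.trans (le_of_eq (congrArg 𝓝 ?_))
  field_simp
  ring

/-! ### The double-exponential transformation -/

lemma psiDE_mem_Ioo {a b : ℝ} (hab : a < b) (x : ℝ) : psiDE a b x ∈ Set.Ioo a b := by
  have h1 := Real.tanh_lt_one (Real.pi/2 * Real.sinh x)
  have h2 := Real.neg_one_lt_tanh (Real.pi/2 * Real.sinh x)
  unfold psiDE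
  constructor <;> nlinarith

lemma phiDE_psiDE {a b : ℝ} (hab : a < b) (x : ℝ) : phiDE a b (psiDE a b x) = x := by
  have hba : b - a ≠ 0 := (sub_pos.2 hab).ne'
  set y := Real.pi/2 * Real.sinh x with hy
  have h1 := Real.tanh_lt_one y
  have hE : (psiDE a b x - a) / (b - psiDE a b x) = (1 + Real.tanh y) / (1 - Real.tanh y) := by
    have e1 : psiDE a b x - a = (b - a)/2 * (1 + Real.tanh y) := by unfold psiDE; ring
    have e2 : b - psiDE a b x = (b - a)/2 * (1 - Real.tanh y) := by unfold psiDE; ring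
    rw [e1, e2, mul_div_mul_left _ _ (by positivity)]
  have hE2 : (1 + Real.tanh y) / (1 - Real.tanh y) = Real.exp (2 * y) := by
    rw [div_eq_iff (by linarith), Real.tanh_eq, Real.exp_neg, two_mul, Real.exp_add]
    have := Real.exp_pos y
    field_simp
    ring
  rw [phiDE, hE, hE2, Real.log_exp, hy]
  have : 1 / Real.pi * (2 * (Real.pi / 2 * Real.sinh x)) = Real.sinh x := by
    have := Real.pi_ne_zero
    field_simp
  rw [this, Real.arsinh_sinh]

lemma continuousOn_phiDE {a b : ℝ} : ContinuousOn (phiDE a b) (Set.Ioo a b) := by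
  unfold phiDE
  refine Real.continuous_arsinh.comp_continuousOn (continuousOn_const.mul ?_)
  refine ContinuousOn.log ((by fun_prop : ContinuousOn (fun t => t - a) _).div
    (by fun_prop) fun t ht => (sub_pos.2 ht.2).ne') fun t ht => ?_
  exact (div_pos (sub_pos.2 ht.1) (sub_pos.2 ht.2)).ne'

lemma tendsto_phiDE_left {a b : ℝ} (hab : a < b) : Tendsto (phiDE a b) (𝓝[>] a) atBot := by
  have h1 : Tendsto (fun t => (t - a) / (b - t)) (𝓝[>] a) (𝓝[>] 0) := by
    refine tendsto_nhdsWithin_iff.2 ⟨?_, ?_⟩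
    · have : ContinuousAt (fun t => (t - a) / (b - t)) a :=
        ContinuousAt.div (by fun_prop) (by fun_prop) (sub_pos.2 hab).ne'
      have h := this.tendsto
      simp only [sub_self, zero_div] at h
      exact h.mono_left nhdsWithin_le_nhds
    · filter_upwards [Ioo_mem_nhdsGT hab] with t ht
      exact div_pos (sub_pos.2 ht.1) (sub_pos.2 ht.2)
  exact (Real.sinhOrderIso.symm.tendsto_atBot).comp
    ((Real.tendsto_log_nhdsGT_zero.comp h1).const_mul_atBot (by positivity))

lemma tendsto_phiDE_right {a b : ℝ} (hab : a < b) : Tendsto (phiDE a b) (𝓝[<] b) atTop := by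
  have h1 : Tendsto (fun t => b - t) (𝓝[<] b) (𝓝[>] 0) := by
    refine tendsto_nhdsWithin_iff.2 ⟨?_, ?_⟩
    · have : ContinuousAt (fun t => b - t) b := by fun_prop
      have h := this.tendsto
      simp only [sub_self] at h
      exact h.mono_left nhdsWithin_le_nhds
    · filter_upwards [self_mem_nhdsWithin] with t ht
      exact sub_pos.2 (Set.mem_Iio.1 ht)
  have h2 : Tendsto (fun t => t - a) (𝓝[<] b) (𝓝 (b - a)) :=
    ((continuous_id.sub continuous_const).tendsto b).mono_left nhdsWithin_le_nhds
  have h3 : Tendsto (fun t => (t - a) / (b - t)) (𝓝[<] b) atTop := by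
    simpa only [div_eq_mul_inv, Function.comp_def] using
      h2.pos_mul_atTop (sub_pos.2 hab) (tendsto_inv_nhdsGT_zero.comp h1)
  exact (Real.sinhOrderIso.symm.tendsto_atTop).comp
    ((Real.tendsto_log_atTop.comp h3).const_mul_atTop (by positivity))

/-! ### Continuity of the operators -/

/-- A continuous function on `(a,b)` with one-sided limits `A` and `B`, extended by these limits in
the piecewise form used by `JDEext` and `PNDE`, is continuous on `[a,b]`. -/
lemma continuousOn_endpoint_ext {E : Type*} [TopologicalSpace E] {a b : ℝ} (hab : a < b)
    {f : ℝ → E} {A B : E} (hf : ContinuousOn f (Set.Ioo a b))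
    (ha : Tendsto f (𝓝[>] a) (𝓝 A)) (hb : Tendsto f (𝓝[<] b) (𝓝 B)) :
    ContinuousOn (fun t => if t ≤ a then A else if b ≤ t then B else f t) (Set.Icc a b) := by
  set F : ℝ → E := fun t => if t ≤ a then A else if b ≤ t then B else f t with hF
  have hFf : ∀ t ∈ Set.Ioo a b, F t = f t := fun t ht => by
    simp only [hF, if_neg (not_le.2 ht.1), if_neg (not_le.2 ht.2)]
  have hFa : F a = A := by simp [hF]
  have hFb : F b = B := by simp [hF, hab]
  intro t ht
  rcases eq_or_lt_of_le ht.1 with rfl | h1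
  · rw [continuousWithinAt_Icc_iff_Ici hab, ← continuousWithinAt_Ioi_iff_Ici,
      ContinuousWithinAt, hFa]
    refine ha.congr' ?_
    filter_upwards [Ioo_mem_nhdsGT hab] with s hs using (hFf s hs).symm
  rcases eq_or_lt_of_le ht.2 with rfl | h2
  · rw [continuousWithinAt_Icc_iff_Iic hab, ← continuousWithinAt_Iio_iff_Iic,
      ContinuousWithinAt, hFb]
    refine hb.congr' ?_
    filter_upwards [Ioo_mem_nhdsLT hab] with s hs using (hFf s hs).symm
  · have hm : Set.Ioo a b ∈ 𝓝 t := Ioo_mem_nhds h1 h2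
    refine ContinuousAt.continuousWithinAt ((hf.continuousAt hm).congr ?_)
    filter_upwards [hm] with s hs using (hFf s hs).symm

lemma continuousOn_JDEext {a b h : ℝ} (hab : a < b) (hh : 0 < h) (j : ℤ) :
    ContinuousOn (JDEext a b h j) (Set.Icc a b) :=
  continuousOn_endpoint_ext hab ((continuous_Jfun j h).comp_continuousOn continuousOn_phiDE)
    ((tendsto_Jfun_atBot hh j).comp (tendsto_phiDE_left hab))
    ((tendsto_Jfun_atTop hh j).comp (tendsto_phiDE_right hab))

lemma tDE_mem_Ioo {a b : ℝ} (hab : a < b) (h : ℝ) (j : ℤ) : tDE a b h j ∈ Set.Ioo a b :=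
  psiDE_mem_Ioo hab _

lemma tDE_mem_Icc {a b : ℝ} (hab : a < b) (h : ℝ) (j : ℤ) : tDE a b h j ∈ Set.Icc a b :=
  Set.Ioo_subset_Icc_self (tDE_mem_Ioo hab h j)

/-- `V_N f` is continuous for any `f`, which enters only through its values at the nodes. -/
lemma continuousOn_VNDE {a b h : ℝ} (hab : a < b) (hh : 0 < h) (N : ℕ) {k : ℝ → ℝ → ℂ}
    (hk : ContinuousOn (Function.uncurry k) (Set.Icc a b ×ˢ Set.Icc a b)) (f : ℝ → ℂ) :
    ContinuousOn (VNDE a b h N k f) (Set.Icc a b) := by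
  unfold VNDE
  refine continuousOn_finsetSum _ fun j _ => ?_
  have hkj : ContinuousOn (fun t => k t (tDE a b h j)) (Set.Icc a b) :=
    hk.comp (f := fun t => (t, tDE a b h j)) (by fun_prop)
      fun t ht => ⟨ht, tDE_mem_Icc hab h j⟩
  exact ((hkj.mul continuousOn_const).mul continuousOn_const).mul
    (Complex.continuous_ofReal.comp_continuousOn (continuousOn_JDEext hab hh j))

lemma continuousOn_PNDE {a b h : ℝ} (hab : a < b) (hh : 0 < h) (N : ℕ) (f : ℝ → ℂ) :
    ContinuousOn (PNDE a b h N f) (Set.Icc a b) := by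
  have hba : b - a ≠ 0 := (sub_pos.2 hab).ne'
  have hA : Continuous fun t => ((omA a b t : ℝ) : ℂ) := by unfold omA; fun_prop
  have hB : Continuous fun t => ((omB a b t : ℝ) : ℂ) := by unfold omB; fun_prop
  -- At an endpoint the Sinc terms vanish, leaving the affine part evaluated there.
  have hlim : ∀ (l : Filter ℝ) (t₀ : ℝ), l ≤ 𝓝 t₀ →
      (∀ j, Tendsto (fun t => sincF j h (phiDE a b t)) l (𝓝 0)) →
      Tendsto (fun t => f (tDE a b h (-(N:ℤ))) * ((omA a b t : ℝ) : ℂ)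
        + f (tDE a b h (N:ℤ)) * ((omB a b t : ℝ) : ℂ)
        + ∑ j ∈ Finset.Icc (-(N:ℤ)) (N:ℤ),
          (f (tDE a b h j) - f (tDE a b h (-(N:ℤ))) * ((omA a b (tDE a b h j) : ℝ) : ℂ)
            - f (tDE a b h (N:ℤ)) * ((omB a b (tDE a b h j) : ℝ) : ℂ))
            * ((sincF j h (phiDE a b t) : ℝ) : ℂ)) l
        (𝓝 (f (tDE a b h (-(N:ℤ))) * ((omA a b t₀ : ℝ) : ℂ)
          + f (tDE a b h (N:ℤ)) * ((omB a b t₀ : ℝ) : ℂ))) := by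
    intro l t₀ hl hs
    have h1 := (((hA.tendsto t₀).mono_left hl).const_mul (f (tDE a b h (-(N:ℤ))))).add
      (((hB.tendsto t₀).mono_left hl).const_mul (f (tDE a b h (N:ℤ))))
    have h2 := tendsto_finsetSum (Finset.Icc (-(N:ℤ)) (N:ℤ)) fun j _ =>
      ((Complex.continuous_ofReal.tendsto 0).comp (hs j)).const_mul
        (f (tDE a b h j) - f (tDE a b h (-(N:ℤ))) * ((omA a b (tDE a b h j) : ℝ) : ℂ)
            - f (tDE a b h (N:ℤ)) * ((omB a b (tDE a b h j) : ℝ) : ℂ))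
    simpa using h1.add h2
  refine continuousOn_endpoint_ext hab ?_ ?_ ?_
  · refine (((continuous_const.mul hA).add (continuous_const.mul hB)).continuousOn).add
      (continuousOn_finsetSum _ fun j _ => continuousOn_const.mul ?_)
    exact Complex.continuous_ofReal.comp_continuousOn
      ((continuous_sincF hh j).comp_continuousOn continuousOn_phiDE)
  · convert hlim (𝓝[>] a) a nhdsWithin_le_nhds
      fun j => (tendsto_sincF_atBot hh j).comp (tendsto_phiDE_left hab) using 2
    simp [omA, omB, div_self hba]
  · convert hlim (𝓝[<] b) b nhdsWithin_le_nhds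
      fun j => (tendsto_sincF_atTop hh j).comp (tendsto_phiDE_right hab) using 2
    simp [omA, omB, div_self hba]

/-! ### Dependence on nodal values -/

/-- `P_N f` interpolates `f` at the nodes, because `S(j,h)(ih) = δ_ij`. -/
lemma PNDE_node {a b h : ℝ} (hab : a < b) (hh : 0 < h) {N : ℕ} (f : ℝ → ℂ) {i : ℤ}
    (hi : i ∈ Finset.Icc (-(N:ℤ)) (N:ℤ)) :
    PNDE a b h N f (tDE a b h i) = f (tDE a b h i) := by
  have hm := tDE_mem_Ioo hab h i
  have hphi : phiDE a b (tDE a b h i) = i * h := phiDE_psiDE hab _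
  rw [PNDE, if_neg (not_le.2 hm.1), if_neg (not_le.2 hm.2), hphi]
  simp only [sincF_node hh, apply_ite ((↑) : ℝ → ℂ), Complex.ofReal_one, Complex.ofReal_zero,
    mul_ite, mul_one, mul_zero]
  rw [Finset.sum_ite_eq, if_pos hi]
  ring

lemma VNDE_congr {a b h : ℝ} {N : ℕ} {k : ℝ → ℝ → ℂ} {f f' : ℝ → ℂ}
    (hff : ∀ j ∈ Finset.Icc (-(N:ℤ)) (N:ℤ), f (tDE a b h j) = f' (tDE a b h j)) :
    VNDE a b h N k f = VNDE a b h N k f' := by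
  funext t
  exact Finset.sum_congr rfl fun j hj => by rw [hff j hj]

lemma PNDE_congr {a b h : ℝ} {N : ℕ} {f f' : ℝ → ℂ}
    (hff : ∀ j ∈ Finset.Icc (-(N:ℤ)) (N:ℤ), f (tDE a b h j) = f' (tDE a b h j)) :
    PNDE a b h N f = PNDE a b h N f' := by
  have h1 := hff (-(N:ℤ)) (by simp)
  have h2 := hff (N:ℤ) (by simp)
  funext t
  unfold PNDE
  rw [h1, h2, Finset.sum_congr rfl fun j hj => by rw [hff j hj]]

/-! ### Correspondence between the two equations -/

/-- If `u = g + V_N u`, then `V_N (P_N u) = V_N u`, hence `P_N (g + V_N (P_N u)) = P_N u`. -/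
lemma BpredDE_of_ApredDE {a b h : ℝ} {N : ℕ} (hab : a < b) (hh : 0 < h) {k : ℝ → ℝ → ℂ}
    {g u : ℝ → ℂ} (hu : ApredDE a b h N k g u) : BpredDE a b h N k g (PNDE a b h N u) := by
  refine ⟨continuousOn_PNDE hab hh N u, fun t _ => ?_⟩
  rw [VNDE_congr (fun j hj => PNDE_node hab hh u hj)]
  exact congrFun (PNDE_congr fun j _ => hu.2 _ (tDE_mem_Icc hab h j)) t

lemma BpredDE.node {a b h : ℝ} {N : ℕ} (hab : a < b) (hh : 0 < h) {k : ℝ → ℝ → ℂ}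
    {g v : ℝ → ℂ} (hv : BpredDE a b h N k g v) {j : ℤ}
    (hj : j ∈ Finset.Icc (-(N:ℤ)) (N:ℤ)) :
    v (tDE a b h j) = g (tDE a b h j) + VNDE a b h N k v (tDE a b h j) := by
  rw [hv.2 _ (tDE_mem_Icc hab h j), PNDE_node hab hh _ hj]

/-- If `v = P_N (g + V_N v)`, then `u = g + V_N v` agrees with `v` at the nodes,
so `V_N u = V_N v`. -/
lemma ApredDE_of_BpredDE {a b h : ℝ} {N : ℕ} (hab : a < b) (hh : 0 < h) {k : ℝ → ℝ → ℂ}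
    {g v : ℝ → ℂ} (hk : ContinuousOn (Function.uncurry k) (Set.Icc a b ×ˢ Set.Icc a b))
    (hg : ContinuousOn g (Set.Icc a b)) (hv : BpredDE a b h N k g v) :
    ApredDE a b h N k g (fun s => g s + VNDE a b h N k v s) := by
  refine ⟨hg.add (continuousOn_VNDE hab hh N hk v), fun t _ => ?_⟩
  exact congrArg (g t + ·) (congrFun (VNDE_congr (f := v)
    (f' := fun s => g s + VNDE a b h N k v s) fun j hj => hv.node hab hh hj) t)

/-- equivalence of unique solvability of the DE-Sinc-Nyström and
DE-Sinc-collocation equations, and `v = P_N^DE u_N^DE`. -/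
theorem DE_Nystrom_collocation_equiv
    (a b h : ℝ) (N : ℕ) (hab : a < b) (hN : 0 < N) (hh : 0 < h)
    (k : ℝ → ℝ → ℂ) (g : ℝ → ℂ)
    (hk : ContinuousOn (Function.uncurry k) (Set.Icc a b ×ˢ Set.Icc a b))
    (hg : ContinuousOn g (Set.Icc a b)) :
    ((∃ uN, ApredDE a b h N k g uN ∧
        ∀ u', ApredDE a b h N k g u' → Set.EqOn u' uN (Set.Icc a b)) ↔
      (∃ v, BpredDE a b h N k g v ∧
        ∀ v', BpredDE a b h N k g v' → Set.EqOn v' v (Set.Icc a b))) ∧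
    (∀ uN v, ApredDE a b h N k g uN →
      (∀ u', ApredDE a b h N k g u' → Set.EqOn u' uN (Set.Icc a b)) →
      BpredDE a b h N k g v →
      Set.EqOn v (PNDE a b h N uN) (Set.Icc a b)) := by
  have key : ∀ uN v, (∀ u', ApredDE a b h N k g u' → Set.EqOn u' uN (Set.Icc a b)) →
      BpredDE a b h N k g v → Set.EqOn v (PNDE a b h N uN) (Set.Icc a b) := by
    intro uN v huniq hv t ht
    have hu := huniq _ (ApredDE_of_BpredDE hab hh hk hg hv)
    rw [hv.2 t ht, PNDE_congr fun j _ => hu (tDE_mem_Icc hab h j)]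
  refine ⟨⟨?_, ?_⟩, fun uN v _ huniq hv => key uN v huniq hv⟩
  · rintro ⟨uN, hu, huniq⟩
    exact ⟨_, BpredDE_of_ApredDE hab hh hu, fun v' hv' => key uN v' huniq hv'⟩
  · rintro ⟨v, hv, huniq⟩
    refine ⟨_, ApredDE_of_BpredDE hab hh hk hg hv, fun u' hu' t ht => ?_⟩
    -- `P_N u'` solves the collocation equation, so `u'` and `v` agree at the nodes.
    have hE := huniq _ (BpredDE_of_ApredDE hab hh hu')
    have hnode : ∀ j ∈ Finset.Icc (-(N:ℤ)) (N:ℤ), u' (tDE a b h j) = v (tDE a b h j) :=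
      fun j hj => (PNDE_node hab hh u' hj).symm.trans (hE (tDE_mem_Icc hab h j))
    rw [hu'.2 t ht, VNDE_congr hnode]

end

end SincVolterra
end
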